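/- arXiv:2009.01704 — 3 statements merged into one kernel-verified Lean document; each statement's English description precedes it below -/
import Mathlib

section
/- Let 𝒳, 𝒰, 𝒰' be finite types and let p be a joint probability mass function on 𝒳 × 𝒰 × 𝒰' satisfying the Markov chain X − U − U', i.e. p(x,u,u') · P_U(u) = P_{XU}(x,u) · P_{UU'}(u,u') for all x, u, u', where P_U, P_{XU}, P_{UU'} are the corresponding marginals. Assume the marginal P_X is positive. Then χ²-information is non-increasing under this post-processing: ∑_{u' : P_{U'}(u')>0} P_{U'}(u') · χ²(P_{X|U'=u'} ‖ P_X) ≤ ∑_{u : P_U(u)>0} P_U(u) · χ²(P_{X|U=u} ‖ P_X), where P_{X|U=u}(x) = P_{XU}(x,u)/P_U(u) and P_{X|U'=u'}(x) = P_{XU'}(x,u')/P_{U'}(u'). -/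
/-!
Under the Markov chain `X − U − U'`, each conditional law `P_{X|U'=u'}` is the barycentre of the
laws `P_{X|U=u}` with weights `P_{UU'}(u, u')`. Jensen's inequality for a convex functional `F` of
laws on `𝒳`, multiplied by `P_{U'}(u')` and summed over `u'`, therefore bounds the average of
`F(P_{X|U'=u'})` by that of `F(P_{X|U=u})`; the χ²-divergence from a fixed law is such an `F`.
-/

open Finset

theorem sum_filter_pos_eq_sum_of_le {ι : Type*} [Fintype ι] {a b : ι → ℝ} (ha : ∀ i, 0 ≤ a i)
    (hab : ∀ i, a i ≤ b i) : ∑ i with 0 < b i, a i = ∑ i, a i :=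
  sum_filter_of_ne fun i _ hi => ((ha i).lt_of_ne' hi).trans_le (hab i)

theorem div_sum_mem_stdSimplex {ι : Type*} [Fintype ι] {a : ι → ℝ} (ha : ∀ i, 0 ≤ a i)
    (hsum : 0 < ∑ i, a i) : (fun i => a i / ∑ j, a j) ∈ stdSimplex ℝ ι :=
  ⟨fun i => div_nonneg (ha i) hsum.le, by rw [← sum_div, div_self hsum.ne']⟩

theorem sum_mul_map_centerMass_le {ι κ E : Type*} [AddCommGroup E] [Module ℝ E] {K : Set E}
    {F : E → ℝ} (hF : ConvexOn ℝ K F) {s : Finset ι} {t : Finset κ} {w : ι → κ → ℝ} {z : ι → E}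
    (hw : ∀ i ∈ s, ∀ j ∈ t, 0 ≤ w i j) (hpos : ∀ j ∈ t, 0 < ∑ i ∈ s, w i j)
    (hz : ∀ i ∈ s, z i ∈ K) :
    ∑ j ∈ t, (∑ i ∈ s, w i j) * F (s.centerMass (fun i => w i j) z)
      ≤ ∑ i ∈ s, (∑ j ∈ t, w i j) * F (z i) := by
  have jensen : ∀ j ∈ t, (∑ i ∈ s, w i j) * F (s.centerMass (fun i => w i j) z)
      ≤ ∑ i ∈ s, w i j * F (z i) := fun j hj => by
    have h := hF.map_centerMass_le (fun i hi => hw i hi j hj) (hpos j hj) hz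
    rwa [centerMass.eq_def s _ (F ∘ z), smul_eq_mul, le_inv_mul_iff₀ (hpos j hj)] at h
  calc ∑ j ∈ t, (∑ i ∈ s, w i j) * F (s.centerMass (fun i => w i j) z)
      ≤ ∑ j ∈ t, ∑ i ∈ s, w i j * F (z i) := sum_le_sum jensen
    _ = ∑ i ∈ s, (∑ j ∈ t, w i j) * F (z i) := by
      simp only [sum_comm (s := t), sum_mul]

/-- The χ²-divergence `χ²(p‖q)` of two vectors on a finite type; coordinates with `q x = 0`
contribute `0`. -/
noncomputable def chiSqDiv {𝒳 : Type*} [Fintype 𝒳] (p q : 𝒳 → ℝ) : ℝ :=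
  ∑ x, (p x - q x) ^ 2 / q x

theorem convexOn_chiSqDiv {𝒳 : Type*} [Fintype 𝒳] {q : 𝒳 → ℝ} (hq : ∀ x, 0 ≤ q x) :
    ConvexOn ℝ Set.univ fun p => chiSqDiv p q := by
  refine ⟨convex_univ, fun p _ r _ a b ha hb hab => ?_⟩
  have convex_sq (x : 𝒳) : (a * p x + b * r x - q x) ^ 2
      ≤ a * (p x - q x) ^ 2 + b * (r x - q x) ^ 2 := by
    have h := (even_two.convexOn_pow (𝕜 := ℝ)).2 (Set.mem_univ (p x - q x))
      (Set.mem_univ (r x - q x)) ha hb hab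
    have affine : a * p x + b * r x - q x = a * (p x - q x) + b * (r x - q x) := by
      linear_combination q x * hab
    simpa only [affine, smul_eq_mul] using h
  simp only [chiSqDiv, smul_eq_mul, mul_sum, ← sum_add_distrib, ← mul_div_assoc, ← add_div]
  exact sum_le_sum fun x _ => div_le_div_of_nonneg_right (convex_sq x) (hq x)

theorem centerMass_cond_eq_of_markov {𝒳 𝒰 𝒱 : Type*} [Fintype 𝒳] [Fintype 𝒰] [Fintype 𝒱]
    {p : 𝒳 → 𝒰 → 𝒱 → ℝ} (hp : ∀ x u v, 0 ≤ p x u v)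
    {PU : 𝒰 → ℝ} (hPU : ∀ u, PU u = ∑ x, ∑ v, p x u v) {PXU : 𝒳 → 𝒰 → ℝ}
    {PUV : 𝒰 → 𝒱 → ℝ} (hmarkov : ∀ x u v, p x u v * PU u = PXU x u * PUV u v) (v : 𝒱) :
    ({u | 0 < PU u} : Finset 𝒰).centerMass (PUV · v) (fun u x => PXU x u / PU u)
      = fun x => (∑ u, p x u v) / ∑ u with 0 < PU u, PUV u v := by
  have p_le_PU (x : 𝒳) (u : 𝒰) : p x u v ≤ PU u := by
    rw [hPU]
    exact (single_le_sum (fun v _ => hp x u v) (mem_univ v)).trans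
      (single_le_sum (f := fun x => ∑ v, p x u v)
        (fun x _ => sum_nonneg fun v _ => hp x u v) (mem_univ x))
  have sum_PUV_mul_cond (x : 𝒳) : ∑ u with 0 < PU u, PUV u v * (PXU x u / PU u) = ∑ u, p x u v := by
    rw [← sum_filter_pos_eq_sum_of_le (fun u => hp x u v) (p_le_PU x)]
    refine sum_congr rfl fun u hu => ?_
    rw [← mul_div_assoc, mul_comm, ← hmarkov, mul_div_cancel_right₀ _ (mem_filter.1 hu).2.ne']
  ext x
  simp only [centerMass, Pi.smul_apply, Finset.sum_apply, smul_eq_mul, sum_PUV_mul_cond,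
    inv_mul_eq_div]

theorem stmt_10_general {𝒳 𝒰 𝒱 : Type*} [Fintype 𝒳] [Fintype 𝒰] [Fintype 𝒱]
    (p : 𝒳 → 𝒰 → 𝒱 → ℝ) (hp : ∀ x u v, 0 ≤ p x u v)
    (PU : 𝒰 → ℝ) (hPU : ∀ u, PU u = ∑ x, ∑ v, p x u v)
    (PXU : 𝒳 → 𝒰 → ℝ) (hPXU : ∀ x u, PXU x u = ∑ v, p x u v)
    (PUV : 𝒰 → 𝒱 → ℝ) (hPUV : ∀ u v, PUV u v = ∑ x, p x u v)
    (PV : 𝒱 → ℝ) (hPV : ∀ v, PV v = ∑ x, ∑ u, p x u v)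
    (PXV : 𝒳 → 𝒱 → ℝ) (hPXV : ∀ x v, PXV x v = ∑ u, p x u v)
    (hmarkov : ∀ x u v, p x u v * PU u = PXU x u * PUV u v)
    {F : (𝒳 → ℝ) → ℝ} (hF : ConvexOn ℝ (stdSimplex ℝ 𝒳) F) :
    ∑ v with 0 < PV v, PV v * F (fun x => PXV x v / PV v)
      ≤ ∑ u with 0 < PU u, PU u * F (fun x => PXU x u / PU u) := by
  have PUV_nonneg (u v) : 0 ≤ PUV u v := hPUV u v ▸ sum_nonneg fun x _ => hp x u v
  have PUV_le_PU (u v) : PUV u v ≤ PU u := by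
    rw [hPUV, hPU]
    exact sum_le_sum fun x _ => single_le_sum (fun v _ => hp x u v) (mem_univ v)
  have PUV_le_PV (u v) : PUV u v ≤ PV v := by
    rw [hPUV, hPV]
    exact sum_le_sum fun x _ => single_le_sum (fun u _ => hp x u v) (mem_univ u)
  have sum_PUV_eq_PU (u) : ∑ v with 0 < PV v, PUV u v = PU u := by
    rw [sum_filter_pos_eq_sum_of_le (PUV_nonneg u) (PUV_le_PV u)]
    simpa only [hPUV, hPU] using sum_comm
  have sum_PUV_eq_PV (v) : ∑ u with 0 < PU u, PUV u v = PV v := by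
    rw [sum_filter_pos_eq_sum_of_le (PUV_nonneg · v) (PUV_le_PU · v)]
    simpa only [hPUV, hPV] using sum_comm
  have cond_mem_stdSimplex : ∀ u ∈ ({u | 0 < PU u} : Finset 𝒰),
      (fun x => PXU x u / PU u) ∈ stdSimplex ℝ 𝒳 := fun u hu => by
    have PU_eq_sum_PXU : PU u = ∑ x, PXU x u := by simp only [hPU, hPXU]
    have PU_pos := (mem_filter.1 hu).2
    rw [PU_eq_sum_PXU] at PU_pos ⊢
    exact div_sum_mem_stdSimplex (fun x => hPXU x u ▸ sum_nonneg fun v _ => hp x u v) PU_pos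
  have jensen := sum_mul_map_centerMass_le hF (t := {v | 0 < PV v})
    (fun u _ v _ => PUV_nonneg u v) (fun v hv => sum_PUV_eq_PV v ▸ (mem_filter.1 hv).2)
    cond_mem_stdSimplex
  simpa only [centerMass_cond_eq_of_markov hp hPU hmarkov, sum_PUV_eq_PU, sum_PUV_eq_PV, ← hPXV]
    using jensen

theorem stmt_10 {𝒳 𝒰 𝒱 : Type*} [Fintype 𝒳] [Fintype 𝒰] [Fintype 𝒱]
    -- 𝒱 plays the role of 𝒰'
    (p : 𝒳 → 𝒰 → 𝒱 → ℝ) (hpnn : ∀ x u u', 0 ≤ p x u u')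
    (hpsum : ∑ x, ∑ u, ∑ u', p x u u' = 1)
    (PU : 𝒰 → ℝ) (hPU : ∀ u, PU u = ∑ x, ∑ u', p x u u')
    (PXU : 𝒳 → 𝒰 → ℝ) (hPXU : ∀ x u, PXU x u = ∑ u', p x u u')
    (PUU' : 𝒰 → 𝒱 → ℝ) (hPUU' : ∀ u u', PUU' u u' = ∑ x, p x u u')
    (PX : 𝒳 → ℝ) (hPX : ∀ x, PX x = ∑ u, ∑ u', p x u u') (hPXpos : ∀ x, 0 < PX x)
    (PU' : 𝒱 → ℝ) (hPU' : ∀ u', PU' u' = ∑ x, ∑ u, p x u u')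
    (PXU' : 𝒳 → 𝒱 → ℝ) (hPXU' : ∀ x u', PXU' x u' = ∑ u, p x u u')
    (hmarkov : ∀ x u u', p x u u' * PU u = PXU x u * PUU' u u') :
    ∑ u' ∈ Finset.univ.filter (fun u' => 0 < PU' u'),
        PU' u' * ∑ x, (PXU' x u' / PU' u' - PX x) ^ 2 / PX x
      ≤ ∑ u ∈ Finset.univ.filter (fun u => 0 < PU u),
          PU u * ∑ x, (PXU x u / PU u - PX x) ^ 2 / PX x :=
  stmt_10_general p hpnn PU hPU PXU hPXU PUU' hPUU' PU' hPU' PXU' hPXU' hmarkov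
    ((convexOn_chiSqDiv fun x => (hPXpos x).le).subset (Set.subset_univ _) (convex_stdSimplex ℝ 𝒳))
end

section
/- Let 𝒳, 𝒴, 𝒵 be finite types with |𝒳| = |𝒵| = K. Let P_{Y|X} be a column-stochastic matrix from 𝒳 to 𝒴, let P_{Z|X} be an invertible column-stochastic K×K matrix, and let P_X be a positive probability vector on 𝒳 with P_Y = P_{Y|X} ⬝ P_X and P_Z = P_{Z|X} ⬝ P_X both positive. Define W₁ = [√P_Y⁻¹] ⬝ P_{Y|X} ⬝ [√P_X] and W₂ = [√P_X⁻¹] ⬝ P_{Z|X}⁻¹ ⬝ [√P_Z]. Then (W₁ ⬝ W₂)ᵀ ⬝ (W₁ ⬝ W₂) ⬝ √P_Z = √P_Z; in particular, 1 is a singular value of W₁ ⬝ W₂ with corresponding right singular vector √P_Z. -/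
open Matrix

/-- A matrix is column-stochastic if its entries are nonnegative and each column sums to 1. -/
def ColStochastic {I J : Type*} [Fintype I] (M : Matrix I J ℝ) : Prop :=
  (∀ i j, 0 ≤ M i j) ∧ ∀ j, ∑ i, M i j = 1

/-!
Write `W(M, p) = [√(M p)⁻¹] M [√p]`. The inner diagonal factors cancel in a product, so
`W(M, N p) W(N, p) = W(M N, p)`; thus `W₁ W₂ = W(P_{Y|X} P_{Z|X}⁻¹, P_Z)`. For any `M` whose columns
sum to one, `W(M, p)` sends `√p` to `√(M p)` and its transpose sends `√(M p)` back to `√p`.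
This applies to `P_{Y|X} P_{Z|X}⁻¹`, which need not be stochastic, because unit column sums survive
inversion and multiplication.
-/

theorem ColStochastic.one_vecMul {I J : Type*} [Fintype I] {M : Matrix I J ℝ}
    (hM : ColStochastic M) : 1 ᵥ* M = 1 :=
  funext fun j => (one_dotProduct _).trans (hM.2 j)

theorem one_vecMul_eq_one_of_mul_eq_one {R I J : Type*} [Semiring R] [Fintype I] [Fintype J]
    [DecidableEq I] {M : Matrix I J R} {N : Matrix J I R} (hMN : M * N = 1) (hM : 1 ᵥ* M = 1) :
    1 ᵥ* N = 1 := by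
  calc 1 ᵥ* N = (1 ᵥ* M) ᵥ* N := by rw [hM]
    _ = 1 := by rw [vecMul_vecMul, hMN, vecMul_one]

section DivergenceTransition

variable {I J K : Type*} [Fintype I] [Fintype J] [DecidableEq I] [DecidableEq J]

/-- The divergence transition matrix `[√q⁻¹] M [√p]` of a channel `M` with input distribution `p`
and output distribution `q`. The output is a separate argument rather than `M *ᵥ p`, and the entries
of `M` may be negative, so that inverses of channels are covered. -/
noncomputable def divergenceTransition (q : I → ℝ) (p : J → ℝ) (M : Matrix I J ℝ) :
    Matrix I J ℝ :=
  diagonal (fun i => (√(q i))⁻¹) * M * diagonal (fun j => √(p j))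

variable {M : Matrix I J ℝ} {p : J → ℝ} {q : I → ℝ}

theorem divergenceTransition_mulVec_sqrt (hp : ∀ j, 0 ≤ p j) (hMp : M *ᵥ p = q) :
    divergenceTransition q p M *ᵥ (fun j => √(p j)) = fun i => √(q i) := by
  have sqrt_mul_sqrt : diagonal (fun j => √(p j)) *ᵥ (fun j => √(p j)) = p := by
    ext j
    rw [mulVec_diagonal, Real.mul_self_sqrt (hp j)]
  rw [divergenceTransition, ← mulVec_mulVec, sqrt_mul_sqrt, ← mulVec_mulVec, hMp]
  ext i
  rw [mulVec_diagonal, inv_mul_eq_div, Real.div_sqrt]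

theorem transpose_divergenceTransition_mulVec_sqrt (hq : ∀ i, 0 < q i) (hM : 1 ᵥ* M = 1) :
    (divergenceTransition q p M)ᵀ *ᵥ (fun i => √(q i)) = fun j => √(p j) := by
  have sqrt_mul_inv_sqrt : (fun i => √(q i)) ᵥ* diagonal (fun i => (√(q i))⁻¹) = 1 := by
    ext i
    rw [vecMul_diagonal, mul_inv_cancel₀ (Real.sqrt_pos.2 (hq i)).ne', Pi.one_apply]
  rw [mulVec_transpose, divergenceTransition, ← vecMul_vecMul, ← vecMul_vecMul,
    sqrt_mul_inv_sqrt, hM]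
  ext j
  rw [vecMul_diagonal, Pi.one_apply, one_mul]

theorem transpose_mul_self_divergenceTransition_mulVec_sqrt (hp : ∀ j, 0 ≤ p j)
    (hq : ∀ i, 0 < q i) (hM : 1 ᵥ* M = 1) (hMp : M *ᵥ p = q) :
    ((divergenceTransition q p M)ᵀ * divergenceTransition q p M) *ᵥ (fun j => √(p j)) =
      fun j => √(p j) := by
  rw [← mulVec_mulVec, divergenceTransition_mulVec_sqrt hp hMp,
    transpose_divergenceTransition_mulVec_sqrt hq hM]

variable [Fintype K] [DecidableEq K]

theorem divergenceTransition_mul (q : I → ℝ) (r : K → ℝ) (M : Matrix I J ℝ) (N : Matrix J K ℝ)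
    (hp : ∀ j, 0 < p j) :
    divergenceTransition q p M * divergenceTransition p r N =
      divergenceTransition q r (M * N) := by
  have sqrt_mul_inv_sqrt :
      diagonal (fun j => √(p j)) * diagonal (fun j => (√(p j))⁻¹) = 1 := by
    rw [diagonal_mul_diagonal, diagonal_eq_one]
    exact funext fun j => mul_inv_cancel₀ (Real.sqrt_pos.2 (hp j)).ne'
  calc divergenceTransition q p M * divergenceTransition p r N
      = diagonal (fun i => (√(q i))⁻¹) * M *
          (diagonal (fun j => √(p j)) * diagonal (fun j => (√(p j))⁻¹)) * N *
          diagonal (fun k => √(r k)) := by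
        simp only [divergenceTransition, Matrix.mul_assoc]
    _ = divergenceTransition q r (M * N) := by
        rw [sqrt_mul_inv_sqrt, Matrix.mul_one, divergenceTransition, Matrix.mul_assoc _ M N]

theorem stmt_15_general {N : Matrix J K ℝ} {r : K → ℝ} (hM : 1 ᵥ* M = 1) (hN : 1 ᵥ* N = 1)
    (hr : ∀ k, 0 ≤ r k) (hp : ∀ j, 0 < p j) (hq : ∀ i, 0 < q i)
    (hNr : N *ᵥ r = p) (hMp : M *ᵥ p = q) :
    ((divergenceTransition q p M * divergenceTransition p r N)ᵀ *
        (divergenceTransition q p M * divergenceTransition p r N)) *ᵥ (fun k => √(r k)) =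
      fun k => √(r k) := by
  rw [divergenceTransition_mul q r M N hp]
  apply transpose_mul_self_divergenceTransition_mulVec_sqrt hr hq
  · rw [← vecMul_vecMul, hM, hN]
  · rw [← mulVec_mulVec, hNr, hMp]

end DivergenceTransition

theorem stmt_15 {𝒳 𝒴 𝒵 : Type*} [Fintype 𝒳] [Fintype 𝒴] [Fintype 𝒵]
    [DecidableEq 𝒳] [DecidableEq 𝒴] [DecidableEq 𝒵]
    (hcard : Fintype.card 𝒳 = Fintype.card 𝒵)
    (PYX : Matrix 𝒴 𝒳 ℝ) (hPYX : ColStochastic PYX)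
    (PZX : Matrix 𝒵 𝒳 ℝ) (hPZX : ColStochastic PZX)
    (PZXinv : Matrix 𝒳 𝒵 ℝ) (hinv1 : PZX * PZXinv = 1) (hinv2 : PZXinv * PZX = 1)
    (PX : 𝒳 → ℝ) (hPXpos : ∀ x, 0 < PX x) (hPXsum : ∑ x, PX x = 1)
    (PY : 𝒴 → ℝ) (hPY : PY = PYX.mulVec PX) (hPYpos : ∀ y, 0 < PY y)
    (PZ : 𝒵 → ℝ) (hPZ : PZ = PZX.mulVec PX) (hPZpos : ∀ z, 0 < PZ z)
    (W₁ : Matrix 𝒴 𝒳 ℝ)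
    (hW₁ : W₁ = diagonal (fun y => (Real.sqrt (PY y))⁻¹) * PYX *
      diagonal (fun x => Real.sqrt (PX x)))
    (W₂ : Matrix 𝒳 𝒵 ℝ)
    (hW₂ : W₂ = diagonal (fun x => (Real.sqrt (PX x))⁻¹) * PZXinv *
      diagonal (fun z => Real.sqrt (PZ z))) :
    ((W₁ * W₂)ᵀ * (W₁ * W₂)).mulVec (fun z => Real.sqrt (PZ z))
      = fun z => Real.sqrt (PZ z) := by
  have PZXinv_mulVec_PZ : PZXinv *ᵥ PZ = PX := by
    rw [hPZ, mulVec_mulVec, hinv2, one_mulVec]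
  rw [hW₁, hW₂]
  exact stmt_15_general hPYX.one_vecMul
    (one_vecMul_eq_one_of_mul_eq_one hinv1 hPZX.one_vecMul)
    (fun z => (hPZpos z).le) hPXpos hPYpos PZXinv_mulVec_PZ hPY.symm
end

section
/- Let 𝒳, 𝒴, 𝒵 be finite types with |𝒳| = |𝒵| = K, P_{Y|X} column-stochastic, P_{Z|X} invertible column-stochastic, P_X a positive probability vector with P_Y = P_{Y|X} ⬝ P_X and P_Z = P_{Z|X} ⬝ P_X positive. Let 𝒰 be finite, P_U a probability vector on 𝒰, and J : 𝒰 → ℝ^𝒵 with ∑_z J_u(z) = 0 for all u, ∑_u P_U(u) • J_u = 0, and ∑_z J_u(z)²/P_Z(z) ≤ 1 for all u. For ε ∈ ℝ define I(ε) = ∑_u P_U(u) · ∑_y (P_Y(y) + ε·(P_{Y|X} ⬝ P_{Z|X}⁻¹ ⬝ J_u)(y)) · log(1 + ε·(P_{Y|X} ⬝ P_{Z|X}⁻¹ ⬝ J_u)(y)/P_Y(y)). Then ε ↦ I(ε) − (ε²/2) · ∑_u P_U(u) · ‖[√P_Y⁻¹] ⬝ P_{Y|X} ⬝ P_{Z|X}⁻¹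 ⬝ [√P_Z] ⬝ L_u‖² is o(ε²) as ε → 0, where L_u = [√P_Z⁻¹] ⬝ J_u. -/
open Matrix Filter Asymptotics

/-- Euclidean norm of a real vector on a finite index type. -/
noncomputable def euclNorm {I : Type*} [Fintype I] (v : I → ℝ) : ℝ :=
  Real.sqrt (∑ i, v i ^ 2)

/-!
Write `p = P_Y`, `q = P_Z`, `W = P_{Y|X} P_{Z|X}⁻¹` and `v_u = W J_u`. At `1` the function
`klFun x = x log x + 1 - x` vanishes together with its derivative and has second derivative `1`, so
`D(p + ε v_u ‖ p) = ε ∑ y, v_u y + ∑ y, p y * klFun ((p y + ε v_u y) / p y)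
  = ε ∑ y, v_u y + (ε² / 2) ∑ y, v_u y ^ 2 / p y + o(ε²)`.
Averaging over `u` kills the linear term, because the `J_u` average to zero. The quadratic
coefficient is the squared Euclidean norm of `[√p⁻¹] v_u`, and `v_u = W [√q] L_u` for
`L_u = [√q⁻¹] J_u`.
-/

open InformationTheory

/-- The Kullback–Leibler divergence `D(q ‖ p)` of real vectors on a finite type. The vectors need
not be normalized, so that it also applies to perturbations of `p` of any total mass. -/
noncomputable def klDivergence {I : Type*} [Fintype I] (q p : I → ℝ) : ℝ :=
  ∑ i, q i * Real.log (q i / p i)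

/-- The squared `ℓ²(1/p)` norm of `v`. It is the `χ²`-divergence of `p + v` from `p`, and twice the
quadratic coefficient in the expansion of the Kullback–Leibler divergence around `p`. -/
noncomputable def chiSq {I : Type*} [Fintype I] (p v : I → ℝ) : ℝ :=
  ∑ i, v i ^ 2 / p i

theorem klFun_sub_half_sq_isLittleO :
    (fun x => klFun x - (x - 1) ^ 2 / 2) =o[nhds 1] fun x => (x - 1) ^ 2 := by
  have contDiffOn_klFun : ContDiffOn ℝ 2 klFun (Set.Ioi 0) :=
    ((contDiffOn_id.mul (Real.contDiffOn_log.mono fun _ hx => ne_of_gt hx)).add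
      contDiffOn_const).sub contDiffOn_id
  have taylor_klFun (x : ℝ) :
      taylorWithinEval klFun 2 (Set.Ioi 0) 1 x = (x - 1) ^ 2 / 2 := by
    have iteratedDeriv_eq (n : ℕ) :
        iteratedDerivWithin n klFun (Set.Ioi 0) 1 = iteratedDeriv n klFun 1 :=
      iteratedDerivWithin_of_isOpen isOpen_Ioi (Set.mem_Ioi.2 one_pos)
    have second_deriv : iteratedDeriv 2 klFun 1 = 1 := by simp [iteratedDeriv_succ']
    simp [taylorWithinEval_succ, iteratedDeriv_eq, second_deriv, klFun_one, one_add_one_eq_two,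
      div_eq_inv_mul]
  simpa only [taylor_klFun, isOpen_Ioi.nhdsWithin_eq (Set.mem_Ioi.2 one_pos)] using
    taylor_isLittleO (convex_Ioi 0) (Set.mem_Ioi.2 one_pos) contDiffOn_klFun

theorem mul_klFun_sub_isLittleO {p : ℝ} (hp : p ≠ 0) (a : ℝ) :
    (fun ε => p * klFun ((p + ε * a) / p) - ε ^ 2 / 2 * (a ^ 2 / p))
      =o[nhds 0] fun ε => ε ^ 2 := by
  have ratio_tendsto : Tendsto (fun ε => (p + ε * a) / p) (nhds 0) (nhds 1) :=
    Continuous.tendsto' (by fun_prop) 0 1 (by simp [hp])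
  have ratio_sub_one (ε : ℝ) : (p + ε * a) / p - 1 = a / p * ε := by field_simp; ring
  have taylor := (klFun_sub_half_sq_isLittleO.comp_tendsto ratio_tendsto).const_mul_left p
  simp only [Function.comp_def, ratio_sub_one, mul_pow] at taylor
  refine (taylor.trans_isBigO (isBigO_const_mul_self _ _ _)).congr_left fun ε => ?_
  field_simp

section Divergence

variable {I U : Type*} [Fintype I] [Fintype U] {p : I → ℝ}

theorem klDivergence_add_smul (hp : ∀ i, p i ≠ 0) (v : I → ℝ) (ε : ℝ) :
    klDivergence (p + ε • v) p =
      ε * ∑ i, v i + ∑ i, p i * klFun ((p i + ε * v i) / p i) := by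
  rw [klDivergence, Finset.mul_sum, ← Finset.sum_add_distrib]
  refine Finset.sum_congr rfl fun i _ => ?_
  have := hp i
  simp only [Pi.add_apply, Pi.smul_apply, smul_eq_mul, klFun_apply]
  field_simp
  ring

theorem klDivergence_add_smul_isLittleO (hp : ∀ i, p i ≠ 0) (v : I → ℝ) :
    (fun ε => klDivergence (p + ε • v) p - ε * ∑ i, v i - ε ^ 2 / 2 * chiSq p v)
      =o[nhds 0] fun ε => ε ^ 2 := by
  refine (IsLittleO.fun_sum (s := Finset.univ) fun i _ =>
    mul_klFun_sub_isLittleO (hp i) (v i)).congr_left fun ε => ?_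
  rw [klDivergence_add_smul hp, add_sub_cancel_left, chiSq, Finset.mul_sum,
    Finset.sum_sub_distrib]

theorem sum_mul_klDivergence_add_smul_isLittleO (hp : ∀ i, p i ≠ 0) {w : U → ℝ} {v : U → I → ℝ}
    (hv : ∑ u, w u * ∑ i, v u i = 0) :
    (fun ε => ∑ u, w u * klDivergence (p + ε • v u) p - ε ^ 2 / 2 * ∑ u, w u * chiSq p (v u))
      =o[nhds 0] fun ε => ε ^ 2 := by
  refine (IsLittleO.fun_sum (s := Finset.univ) fun u _ =>
    (klDivergence_add_smul_isLittleO hp (v u)).const_mul_left (w u)).congr_left fun ε => ?_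
  simp only [mul_sub, Finset.sum_sub_distrib, mul_left_comm (w _), ← Finset.mul_sum, hv, mul_zero,
    sub_zero]

theorem euclNorm_diagonal_inv_sqrt_mulVec_sq [DecidableEq I] (hp : ∀ i, 0 ≤ p i) (v : I → ℝ) :
    euclNorm (diagonal (fun i => (Real.sqrt (p i))⁻¹) *ᵥ v) ^ 2 = chiSq p v := by
  rw [euclNorm, Real.sq_sqrt (Finset.sum_nonneg fun _ _ => sq_nonneg _), chiSq]
  refine Finset.sum_congr rfl fun i _ => ?_
  rw [mulVec_diagonal, mul_pow, inv_pow, Real.sq_sqrt (hp i), inv_mul_eq_div]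

end Divergence

theorem diagonal_mulVec_diagonal_inv_mulVec {I K : Type*} [Fintype I] [DecidableEq I]
    [DivisionSemiring K] {d : I → K} (hd : ∀ i, d i ≠ 0) (v : I → K) :
    diagonal d *ᵥ (diagonal (fun i => (d i)⁻¹) *ᵥ v) = v := by
  ext i
  rw [mulVec_diagonal, mulVec_diagonal, mul_inv_cancel_left₀ (hd i)]

theorem sum_mul_sum_mulVec_eq_zero {I J U R : Type*} [Fintype I] [Fintype J] [Fintype U]
    [CommSemiring R] (W : Matrix I J R) {w : U → R} {x : U → J → R} (hx : ∑ u, w u • x u = 0) :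
    ∑ u, w u * ∑ i, (W *ᵥ x u) i = 0 := by
  have mulVec_mean : ∑ u, w u • (W *ᵥ x u) = 0 := by
    simp only [← mulVec_smul, ← mulVec_sum, hx, mulVec_zero]
  calc ∑ u, w u * ∑ i, (W *ᵥ x u) i
      = ∑ i, (∑ u, w u • (W *ᵥ x u)) i := by
        simp only [Finset.mul_sum, Finset.sum_apply, Pi.smul_apply, smul_eq_mul]
        exact Finset.sum_comm
    _ = 0 := by simp only [mulVec_mean, Pi.zero_apply, Finset.sum_const_zero]

theorem stmt_17_general {𝒴 𝒵 𝒰 : Type*} [Fintype 𝒴] [Fintype 𝒵] [Fintype 𝒰]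
    [DecidableEq 𝒴] [DecidableEq 𝒵] (W : Matrix 𝒴 𝒵 ℝ)
    {p : 𝒴 → ℝ} (hp : ∀ y, 0 < p y) {q : 𝒵 → ℝ} (hq : ∀ z, 0 < q z)
    {w : 𝒰 → ℝ} {J : 𝒰 → 𝒵 → ℝ} (hJ : ∑ u, w u • J u = 0) :
    (fun ε => (∑ u, w u * ∑ y, (p y + ε * (W *ᵥ J u) y) * Real.log (1 + ε * (W *ᵥ J u) y / p y)) -
        ε ^ 2 / 2 * ∑ u, w u * euclNorm ((diagonal (fun y => (Real.sqrt (p y))⁻¹) * W *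
          diagonal (fun z => Real.sqrt (q z))) *ᵥ
            (diagonal (fun z => (Real.sqrt (q z))⁻¹) *ᵥ J u)) ^ 2)
      =o[nhds 0] fun ε => ε ^ 2 := by
  have hp_ne (y : 𝒴) : p y ≠ 0 := (hp y).ne'
  have norm_sq_eq (u : 𝒰) :
      euclNorm ((diagonal (fun y => (Real.sqrt (p y))⁻¹) * W *
        diagonal (fun z => Real.sqrt (q z))) *ᵥ
          (diagonal (fun z => (Real.sqrt (q z))⁻¹) *ᵥ J u)) ^ 2 = chiSq p (W *ᵥ J u) := by
    rw [← mulVec_mulVec, diagonal_mulVec_diagonal_inv_mulVec fun z => (Real.sqrt_pos.2 (hq z)).ne',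
      ← mulVec_mulVec, euclNorm_diagonal_inv_sqrt_mulVec_sq fun y => (hp y).le]
  have one_add_div (t : ℝ) (y : 𝒴) : 1 + t / p y = (p y + t) / p y := by
    rw [add_div, div_self (hp_ne y)]
  simp only [norm_sq_eq, one_add_div]
  exact sum_mul_klDivergence_add_smul_isLittleO hp_ne (sum_mul_sum_mulVec_eq_zero W hJ)

theorem stmt_17 {𝒳 𝒴 𝒵 𝒰 : Type*} [Fintype 𝒳] [Fintype 𝒴] [Fintype 𝒵] [Fintype 𝒰]
    [DecidableEq 𝒳] [DecidableEq 𝒴] [DecidableEq 𝒵]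
    (hcard : Fintype.card 𝒳 = Fintype.card 𝒵)
    (PYX : Matrix 𝒴 𝒳 ℝ) (hPYX : ColStochastic PYX)
    (PZX : Matrix 𝒵 𝒳 ℝ) (hPZX : ColStochastic PZX)
    (PZXinv : Matrix 𝒳 𝒵 ℝ) (hinv1 : PZX * PZXinv = 1) (hinv2 : PZXinv * PZX = 1)
    (PX : 𝒳 → ℝ) (hPXpos : ∀ x, 0 < PX x) (hPXsum : ∑ x, PX x = 1)
    (PY : 𝒴 → ℝ) (hPY : PY = PYX.mulVec PX) (hPYpos : ∀ y, 0 < PY y)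
    (PZ : 𝒵 → ℝ) (hPZ : PZ = PZX.mulVec PX) (hPZpos : ∀ z, 0 < PZ z)
    (PU : 𝒰 → ℝ) (hPUnn : ∀ u, 0 ≤ PU u) (hPUsum : ∑ u, PU u = 1)
    (J : 𝒰 → 𝒵 → ℝ)
    (hJ1 : ∀ u, ∑ z, J u z = 0)
    (hJ2 : ∑ u, PU u • J u = 0)
    (hJ3 : ∀ u, ∑ z, J u z ^ 2 / PZ z ≤ 1)
    (I : ℝ → ℝ)
    (hI : ∀ ε, I ε =
      ∑ u, PU u * ∑ y, (PY y + ε * (PYX * PZXinv).mulVec (J u) y) *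
        Real.log (1 + ε * (PYX * PZXinv).mulVec (J u) y / PY y))
    (L : 𝒰 → 𝒵 → ℝ)
    (hL : ∀ u, L u = (diagonal fun z => (Real.sqrt (PZ z))⁻¹).mulVec (J u)) :
    (fun ε => I ε - ε ^ 2 / 2 * ∑ u, PU u *
        euclNorm ((diagonal (fun y => (Real.sqrt (PY y))⁻¹) * PYX * PZXinv *
          diagonal (fun z => Real.sqrt (PZ z))).mulVec (L u)) ^ 2)
      =o[nhds 0] (fun ε => ε ^ 2) := by
  simpa only [hI, hL, Matrix.mul_assoc] using
    stmt_17_general (PYX * PZXinv) hPYpos hPZpos hJ2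
end
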